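/- Let G and M be types with M nonempty, W a linear order with at least two distinct elements, and val : G → M → W. Consider the interordinal formal context (G, M × Bool × W, r) with r g (m, true, v) ↔ val g m ≤ v and r g (m, false, v) ↔ v ≤ val g m. Then the concept lattice `Concept G (M × Bool × W) r` is atomistic: every concept is the supremum of the atoms below it. -/

import Mathlib

open Set

/-- The relation of the interordinally scaled context of a complete many-valued context with
values `val : G → M → W`: attributes are triples `(m, b, v)`, where `(m, true, v)` means
`m : ≤ v` and `(m, false, v)` means `m : ≥ v`. -/
def interRel {G M W : Type*} [LinearOrder W] (val : G → M → W) :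
    G → M × Bool × W → Prop :=
  fun g x =>
    match x with
    | (m, true, v) => val g m ≤ v
    | (m, false, v) => v ≤ val g m

/-!
Every concept is the supremum of the object concepts below it. If the object concepts form an
antichain, each of them is `⊥` or an atom: a concept strictly below `ofObject r a` has no object
`b` in its extent, since `ofObject r b` would lie strictly below `ofObject r a`. In an interordinal
context, `ofObject r g ≤ ofObject r h` means that `val g m` satisfies all the bounds that `val h m`
does, among them `≤ val h m` and `≥ val h m`, so it forces `val g = val h`.
-/

section ObjectConcepts

variable {α β : Type*} {r : α → β → Prop} {a b : α} {c : Concept α β r}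

theorem ofObject_le_iff_mem_extent : Concept.ofObject r a ≤ c ↔ a ∈ c.extent := by
  rw [Concept.ofObjects_le_iff, singleton_subset_iff]

theorem ofObject_le_ofObject_iff :
    Concept.ofObject r a ≤ Concept.ofObject r b ↔ ∀ y, r b y → r a y := by
  simp [mem_lowerPolar_iff]

theorem sSup_image_ofObject_extent (c : Concept α β r) :
    sSup (Concept.ofObject r '' c.extent) = c := by
  refine le_antisymm (sSup_le ?_) fun a ha => ?_
  · rintro _ ⟨a, ha, rfl⟩
    exact ofObject_le_iff_mem_extent.2 ha
  · exact ofObject_le_iff_mem_extent.1 (le_sSup (mem_image_of_mem _ ha))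

theorem isAtom_ofObject_of_minimal
    (hmin : Minimal (· ∈ range (Concept.ofObject r)) (Concept.ofObject r a))
    (hbot : Concept.ofObject r a ≠ ⊥) : IsAtom (Concept.ofObject r a) := by
  refine ⟨hbot, fun d hd => le_bot_iff.1 fun b hb => ?_⟩
  have hbd : Concept.ofObject r b ≤ d := ofObject_le_iff_mem_extent.2 hb
  exact absurd (hbd.trans_lt hd) (hmin.not_lt (mem_range_self b))

theorem isAtomistic_concept_of_isAntichain_range_ofObject
    (h : IsAntichain (· ≤ ·) (range (Concept.ofObject r))) : IsAtomistic (Concept α β r) := by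
  refine CompleteLattice.isAtomistic_iff.2 fun c =>
    ⟨Concept.ofObject r '' c.extent \ {⊥}, ?_, ?_⟩
  · rw [sSup_sdiff_singleton_bot, sSup_image_ofObject_extent]
  · rintro _ ⟨⟨a, -, rfl⟩, hbot⟩
    exact isAtom_ofObject_of_minimal (h.minimal_mem_iff.2 (mem_range_self a)) hbot

end ObjectConcepts

section Interordinal

variable {G M W : Type*} [LinearOrder W] {val : G → M → W} {g h : G}

theorem forall_interRel_imp_interRel_iff :
    (∀ x, interRel val h x → interRel val g x) ↔ val g = val h := by
  refine ⟨fun himp => funext fun m => ?_, fun heq x hx => ?_⟩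
  · have hle : val g m ≤ val h m := himp (m, true, val h m) le_rfl
    have hge : val h m ≤ val g m := himp (m, false, val h m) le_rfl
    exact le_antisymm hle hge
  · simpa only [interRel, heq] using hx

theorem ofObject_interRel_le_iff :
    Concept.ofObject (interRel val) g ≤ Concept.ofObject (interRel val) h ↔ val g = val h :=
  ofObject_le_ofObject_iff.trans forall_interRel_imp_interRel_iff

theorem isAntichain_range_ofObject_interRel (val : G → M → W) :
    IsAntichain (· ≤ ·) (range (Concept.ofObject (interRel val))) := by
  rintro _ ⟨g, rfl⟩ _ ⟨h, rfl⟩ hne hle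
  have hval : val g = val h := ofObject_interRel_le_iff.1 hle
  exact hne (hle.antisymm (ofObject_interRel_le_iff.2 hval.symm))

end Interordinal

/-- The concept lattice of the interordinal scaling of a complete many-valued context is
atomistic. -/
theorem stmt_9 {G M W : Type*} [Nonempty M] [LinearOrder W]
    (w₁ w₂ : W) (hw : w₁ ≠ w₂) (val : G → M → W) :
    IsAtomistic (Concept G (M × Bool × W) (interRel val)) :=
  isAtomistic_concept_of_isAntichain_range_ofObject (isAntichain_range_ofObject_interRel val)
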